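/- Every cubic graph G satisfies ν₃(G) ≥ (7/6)·|V(G)|, i.e., at least (7/6)|V(G)| edges of G can be covered by three pairwise disjoint matchings. -/

import Mathlib

structure Multigraph where
  V : Type
  E : Type
  fintypeV : Fintype V
  decEqV : DecidableEq V
  fintypeE : Fintype E
  decEqE : DecidableEq E
  ends : E → Sym2 V

attribute [instance] Multigraph.fintypeV Multigraph.decEqV Multigraph.fintypeE Multigraph.decEqE

namespace Multigraph

/-- `e` is a loop if both of its endpoints coincide. -/
def IsLoop (G : Multigraph) (e : G.E) : Prop := (G.ends e).IsDiag

/-- A loopless multigraph. -/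
def Loopless (G : Multigraph) : Prop := ∀ e, ¬ G.IsLoop e

/-- Degree of a vertex: loops count twice. -/
def deg (G : Multigraph) (v : G.V) : ℕ :=
  ∑ e : G.E, (if G.ends e = Sym2.diag v then 2 else if v ∈ G.ends e then 1 else 0)

/-- Adjacency via some edge. -/
def Adj (G : Multigraph) (u v : G.V) : Prop := ∃ e, G.ends e = s(u, v)

/-- Connectivity. -/
def Connected (G : Multigraph) : Prop := ∀ u v : G.V, Relation.ReflTransGen G.Adj u v

/-- A matching: a set of non-loop edges no two of which share an endpoint. -/
def IsMatching (G : Multigraph) (M : Finset G.E) : Prop :=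
  (∀ e ∈ M, ¬ G.IsLoop e) ∧
  ∀ e ∈ M, ∀ f ∈ M, e ≠ f → ∀ v : G.V, v ∈ G.ends e → v ∉ G.ends f

/-- A maximum matching. -/
def IsMaximumMatching (G : Multigraph) (M : Finset G.E) : Prop :=
  G.IsMatching M ∧ ∀ M' : Finset G.E, G.IsMatching M' → M'.card ≤ M.card

/-- `v` is saturated by `M`. -/
def Saturated (G : Multigraph) (M : Finset G.E) (v : G.V) : Prop :=
  ∃ e ∈ M, v ∈ G.ends e

/-- Size of a maximum matching. -/
noncomputable def nu1 (G : Multigraph) : ℕ :=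
  sSup {m | ∃ M : Finset G.E, G.IsMatching M ∧ M.card = m}

/-- Max number of edges coverable by two disjoint matchings. -/
noncomputable def nu2 (G : Multigraph) : ℕ :=
  sSup {m | ∃ H H' : Finset G.E, G.IsMatching H ∧ G.IsMatching H' ∧
    Disjoint H H' ∧ H.card + H'.card = m}

/-- Max number of edges coverable by three pairwise disjoint matchings. -/
noncomputable def nu3 (G : Multigraph) : ℕ :=
  sSup {m | ∃ H₁ H₂ H₃ : Finset G.E, G.IsMatching H₁ ∧ G.IsMatching H₂ ∧ G.IsMatching H₃ ∧
    Disjoint H₁ H₂ ∧ Disjoint H₁ H₃ ∧ Disjoint H₂ H₃ ∧ H₁.card + H₂.card + H₃.card = m}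

/-- Subdividing the edge `e`, with endpoints `u`, `v`, once: replace it by a path `u - w - v`
through a new vertex `w`. -/
def subdivideOnce (G : Multigraph) (e : G.E) (u v : G.V) : Multigraph where
  V := G.V ⊕ Unit
  E := {f : G.E // f ≠ e} ⊕ Bool
  fintypeV := inferInstance
  decEqV := inferInstance
  fintypeE := inferInstance
  decEqE := inferInstance
  ends := fun f =>
    match f with
    | Sum.inl ⟨f, _⟩ => (G.ends f).map Sum.inl
    | Sum.inr true => s(Sum.inl u, Sum.inr ())
    | Sum.inr false => s(Sum.inl v, Sum.inr ())

/-- Subdividing every edge `e` exactly `k e` times, where `fst`/`snd` pick out the endpoints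
of every edge. The edge `e` is replaced by the path
`fst e, (e,0), (e,1), …, (e, k e - 1), snd e` of length `k e + 1`. -/
def subdivide (G : Multigraph) (fst snd : G.E → G.V) (k : G.E → ℕ) : Multigraph where
  V := G.V ⊕ (Σ e : G.E, Fin (k e))
  E := Σ e : G.E, Fin (k e + 1)
  fintypeV := inferInstance
  decEqV := inferInstance
  fintypeE := inferInstance
  decEqE := inferInstance
  ends := fun f =>
    s( if h : f.2.val = 0 then Sum.inl (fst f.1)
       else Sum.inr ⟨f.1, ⟨f.2.val - 1, by omega⟩⟩,
       if h : f.2.val = k f.1 then Sum.inl (snd f.1)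
       else Sum.inr ⟨f.1, ⟨f.2.val, by have := f.2.isLt; omega⟩⟩ )

/-!
Take a proper partial 3-edge-colouring with as few uncoloured edges as possible. At an uncoloured
edge `uv` no colour is missing at both ends, and if `a` is missing at `u` and `b` at `v`, then
the Kempe chain of the colours `a`, `b` starting at `v` ends at `u`, since otherwise swapping the
colours along it would free `a` at both ends. Two uncoloured edges at `u` would therefore yield a
Kempe chain with three ends, so the uncoloured edges form a matching. Moving a colour missing at
`v` from an edge `ux` onto `uv` keeps the colouring optimal and makes `ux` uncoloured; applying
the matching property after one or two such moves shows that `x` meets no uncoloured edge and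
belongs to `uv` alone. Hence every uncoloured edge claims three vertices of its own, so at least
`|E| - |V| / 3` edges are coloured.
-/

section PartialColoring

open Finset Function

theorem card_degree_le_one_le_two_of_connected {V : Type*} [Fintype V] {H : SimpleGraph V}
    [DecidableRel H.Adj] (hH : H.Connected) (hdeg : ∀ x, H.degree x ≤ 2) :
    #{x | H.degree x ≤ 1} ≤ 2 := by
  have hedges : Fintype.card V ≤ #H.edgeFinset + 1 := by
    simpa only [Nat.card_eq_fintype_card, ← SimpleGraph.edgeFinset_card]
      using hH.card_vert_le_card_edgeSet_add_one
  have hsum : ∑ x, H.degree x + #{x | H.degree x ≤ 1} ≤ 2 * Fintype.card V := by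
    calc ∑ x, H.degree x + #{x | H.degree x ≤ 1}
        = ∑ x, (H.degree x + if H.degree x ≤ 1 then 1 else 0) := by
          rw [card_filter, sum_add_distrib]
      _ ≤ ∑ _x : V, 2 := sum_le_sum fun x _ => by have := hdeg x; split_ifs <;> omega
      _ = 2 * Fintype.card V := by rw [sum_const, card_univ, smul_eq_mul, mul_comm]
  rw [H.sum_degrees_eq_twice_card_edges] at hsum
  omega

theorem card_degree_le_one_le_two {V : Type*} [Fintype V] {H : SimpleGraph V}
    [DecidableRel H.Adj] (hdeg : ∀ x, H.degree x ≤ 2) (C : H.ConnectedComponent) [Fintype C] :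
    #{x : C | H.degree x ≤ 1} ≤ 2 := by
  classical
  have hneighbors (x : C) : H.neighborSet x ⊆ C.supp := fun _ hy =>
    (SimpleGraph.ConnectedComponent.sound (SimpleGraph.Adj.reachable hy).symm).trans x.2
  have hdegree (x : C) : C.toSimpleGraph.degree x = H.degree x := by
    convert! SimpleGraph.degree_induce_of_neighborSet_subset (hneighbors x)
  simpa only [hdegree] using card_degree_le_one_le_two_of_connected C.connected_toSimpleGraph
    fun x => (hdegree x).trans_le (hdeg x)

theorem not_reachable_of_degree_le_one {V : Type*} [Fintype V] {H : SimpleGraph V}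
    [DecidableRel H.Adj] (hdeg : ∀ x, H.degree x ≤ 2) {u v w : V} (huv : u ≠ v) (huw : u ≠ w)
    (hvw : v ≠ w) (hu : H.degree u ≤ 1) (hv : H.degree v ≤ 1) (hw : H.degree w ≤ 1)
    (hreach : H.Reachable u v) : ¬ H.Reachable u w := by
  classical
  intro hreach'
  let C := H.connectedComponentMk u
  have hvC : v ∈ C := SimpleGraph.ConnectedComponent.sound hreach.symm
  have hwC : w ∈ C := SimpleGraph.ConnectedComponent.sound hreach'.symm
  have hthree : 2 < #{x : C | H.degree x ≤ 1} :=
    two_lt_card.2 ⟨⟨u, rfl⟩, by simpa using hu, ⟨v, hvC⟩, by simpa using hv, ⟨w, hwC⟩,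
      by simpa using hw, by simpa [Subtype.ext_iff],
      by simpa [Subtype.ext_iff], by simpa [Subtype.ext_iff]⟩
  exact (card_degree_le_one_le_two hdeg C).not_gt hthree

variable {G : Multigraph} {α : Type*}

theorem card_incident_le_deg (G : Multigraph) (v : G.V) : #{e | v ∈ G.ends e} ≤ G.deg v := by
  rw [card_filter, deg]
  exact sum_le_sum fun e _ => by split_ifs <;> omega

theorem sum_deg (G : Multigraph) : ∑ v, G.deg v = 2 * Fintype.card G.E := by
  have hedge (e : G.E) :
      ∑ v, (if G.ends e = Sym2.diag v then 2 else if v ∈ G.ends e then 1 else 0) = 2 := by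
    by_cases hloop : (G.ends e).IsDiag
    · obtain ⟨u, hu⟩ : ∃ u, Sym2.diag u = G.ends e := ⟨_, Sym2.diag_diagElem hloop⟩
      rw [← hu, Fintype.sum_eq_single u fun v hv => ?_, if_pos rfl]
      rw [if_neg (Sym2.diag_injective.ne hv.symm), if_neg (by simpa [Sym2.diag] using hv)]
    · have hne (v : G.V) : G.ends e ≠ Sym2.diag v := fun h => hloop (h ▸ Sym2.diag_isDiag v)
      simp only [hne, if_false, ← card_filter]
      rw [← Sym2.card_toFinset_of_not_isDiag _ hloop]
      congr 1
      ext v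
      simp
  calc ∑ v, G.deg v = ∑ e : G.E, 2 := sum_comm.trans (sum_congr rfl fun e _ => hedge e)
    _ = 2 * Fintype.card G.E := by rw [sum_const, card_univ, smul_eq_mul, mul_comm]

theorem two_mul_card_edges_of_deg_eq {k : ℕ} (hdeg : ∀ v, G.deg v = k) :
    2 * Fintype.card G.E = k * Fintype.card G.V := by
  rw [← sum_deg, sum_congr rfl fun v _ => hdeg v, sum_const, card_univ, smul_eq_mul, mul_comm]

/-- A proper partial edge-colouring with colours in `α`: no colour occurs on two edges at a vertex.
The value `none` means that the edge is uncoloured. -/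
def IsProper (c : G.E → Option α) : Prop :=
  ∀ ⦃e f v a⦄, v ∈ G.ends e → v ∈ G.ends f → c e = some a → c f = some a → e = f

/-- The edges left without a colour. -/
def uncolored (c : G.E → Option α) : Finset G.E := {e | (c e).isNone}

/-- A proper partial edge-colouring with the fewest possible uncoloured edges. -/
def IsOptimal (c : G.E → Option α) : Prop :=
  MinimalFor IsProper (fun c => #(uncolored c)) c

@[simp]
theorem mem_uncolored {c : G.E → Option α} {e : G.E} : e ∈ uncolored c ↔ c e = none := by
  simp [uncolored]

theorem exists_isOptimal (G : Multigraph) (α : Type*) : ∃ c : G.E → Option α, IsOptimal c :=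
  exists_minimalFor_of_wellFoundedLT _ _ ⟨fun _ => none, fun _ _ _ _ _ _ h => by cases h⟩

theorem IsOptimal.of_card_le {c c' : G.E → Option α} (hc : IsOptimal c) (hc' : IsProper c')
    (h : #(uncolored c') ≤ #(uncolored c)) : IsOptimal c' :=
  ⟨hc', fun _ hd _ => h.trans ((le_total _ _).elim id (hc.2 hd))⟩

theorem IsProper.update_none {c : G.E → Option α} (hc : IsProper c) (g : G.E) :
    IsProper (update c g none) := by
  intro e f v a hve hvf he hf
  have hof {k : G.E} (hk : update c g none k = some a) : c k = some a := by
    grind [update_apply]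
  exact hc hve hvf (hof he) (hof hf)

theorem uncolored_update_none (c : G.E → Option α) (g : G.E) :
    uncolored (update c g none) = insert g (uncolored c) := by
  ext f
  by_cases hf : f = g <;> simp [hf]

theorem uncolored_update_some (c : G.E → Option α) (e : G.E) (a : α) :
    uncolored (update c e (some a)) = (uncolored c).erase e := by
  ext f
  by_cases hf : f = e <;> simp [hf]

/-- The graph spanned by the edges of colours `a` and `b`. Its components are the Kempe chains. -/
def kempeGraph (c : G.E → Option α) (a b : α) : SimpleGraph G.V :=
  SimpleGraph.fromEdgeSet (G.ends '' {e | c e = some a ∨ c e = some b})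

variable [DecidableEq α]

open Classical in
/-- The colouring `c` with the colours `a` and `b` exchanged on the Kempe chain through `v`. -/
noncomputable def kempeSwap (c : G.E → Option α) (a b : α) (v : G.V) (e : G.E) : Option α :=
  if ∃ x ∈ G.ends e, (kempeGraph c a b).Reachable v x then (c e).map (Equiv.swap a b) else c e

section KempeSwap

variable {c : G.E → Option α} {a b : α} {v x : G.V} {e : G.E}

theorem kempeSwap_of_reachable (hx : (kempeGraph c a b).Reachable v x) (hxe : x ∈ G.ends e) :
    kempeSwap c a b v e = (c e).map (Equiv.swap a b) :=
  if_pos ⟨x, hxe, hx⟩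

theorem kempeSwap_of_not_reachable (hx : ¬ (kempeGraph c a b).Reachable v x)
    (hxe : x ∈ G.ends e) : kempeSwap c a b v e = c e := by
  by_cases h : ∃ y ∈ G.ends e, (kempeGraph c a b).Reachable v y
  · obtain ⟨y, hye, hy⟩ := h
    have hyx : y ≠ x := by rintro rfl; exact hx hy
    have hends : G.ends e = s(y, x) := (Sym2.mem_and_mem_iff hyx).1 ⟨hye, hxe⟩
    have hab : ¬ (c e = some a ∨ c e = some b) := fun h =>
      have hadj : (kempeGraph c a b).Adj y x := ⟨⟨e, h, hends⟩, hyx⟩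
      hx (hy.trans hadj.reachable)
    rw [kempeSwap_of_reachable hy hye]
    cases hce : c e with
    | none => rfl
    | some d =>
      simp only [hce, Option.some.injEq, not_or] at hab
      rw [Option.map_some, Equiv.swap_apply_of_ne_of_ne hab.1 hab.2]
  · exact if_neg h

theorem kempeSwap_eq_none : kempeSwap c a b v e = none ↔ c e = none := by
  unfold kempeSwap
  split_ifs <;> simp

theorem IsProper.kempeSwap (hc : IsProper c) (a b : α) (v : G.V) :
    IsProper (kempeSwap c a b v) := by
  intro e f x d hxe hxf he hf
  by_cases hx : (kempeGraph c a b).Reachable v x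
  · rw [kempeSwap_of_reachable hx hxe, Option.map_eq_some_iff] at he
    rw [kempeSwap_of_reachable hx hxf, Option.map_eq_some_iff] at hf
    obtain ⟨d₁, he, rfl⟩ := he
    obtain ⟨d₂, hf, hd⟩ := hf
    obtain rfl := (Equiv.swap a b).injective hd
    exact hc hxe hxf he hf
  · rw [kempeSwap_of_not_reachable hx hxe] at he
    rw [kempeSwap_of_not_reachable hx hxf] at hf
    exact hc hxe hxf he hf

theorem IsOptimal.kempeSwap (hc : IsOptimal c) (a b : α) (v : G.V) :
    IsOptimal (kempeSwap c a b v) := by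
  refine hc.of_card_le (hc.prop.kempeSwap a b v) (card_le_card fun e he => ?_)
  exact mem_uncolored.2 (kempeSwap_eq_none.1 (mem_uncolored.1 he))

end KempeSwap

variable [Fintype α]

/-- The colours that occur on no edge at `v`. -/
def missing (c : G.E → Option α) (v : G.V) : Finset α := {a | ∀ e, v ∈ G.ends e → c e ≠ some a}

@[simp]
theorem mem_missing {c : G.E → Option α} {v : G.V} {a : α} :
    a ∈ missing c v ↔ ∀ e, v ∈ G.ends e → c e ≠ some a := by
  simp [missing]

theorem card_add_card_uncolored_le (c : G.E → Option α) (v : G.V) :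
    Fintype.card α + #{e ∈ uncolored c | v ∈ G.ends e} ≤ #(missing c v) + G.deg v := by
  let colored : Finset G.E := {e | v ∈ G.ends e ∧ c e ≠ none}
  have hpresent : #(missing c v)ᶜ ≤ #colored := by
    rw [← card_map Embedding.some]
    refine (card_le_card fun o ho => ?_).trans (card_image_le (f := c))
    obtain ⟨a, ha, rfl⟩ := mem_map.1 ho
    simp only [mem_compl, mem_missing, not_forall, not_not] at ha
    obtain ⟨e, hve, hce⟩ := ha
    exact mem_image.2 ⟨e, by simp [colored, hve, hce], hce⟩
  have hincident : #{e ∈ uncolored c | v ∈ G.ends e} + #colored ≤ G.deg v := by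
    refine le_of_eq_of_le ?_ (card_incident_le_deg G v)
    rw [← card_filter_add_card_filter_not (s := {e | v ∈ G.ends e}) (c · = none)]
    congr 2 <;> ext e <;> simp [colored, and_comm]
  have := card_add_card_compl (missing c v)
  omega

theorem missing_nonempty {c : G.E → Option α} {v : G.V} (hdeg : G.deg v ≤ Fintype.card α)
    {e : G.E} (he : c e = none) (hve : v ∈ G.ends e) : (missing c v).Nonempty := by
  have hpos : 0 < #{e ∈ uncolored c | v ∈ G.ends e} := card_pos.2 ⟨e, by simp [he, hve]⟩
  have := card_add_card_uncolored_le c v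
  exact card_pos.1 (by omega)

theorem two_le_card_missing {c : G.E → Option α} {v : G.V} (hdeg : G.deg v ≤ Fintype.card α)
    {e f : G.E} (hef : e ≠ f) (he : c e = none) (hf : c f = none) (hve : v ∈ G.ends e)
    (hvf : v ∈ G.ends f) : 2 ≤ #(missing c v) := by
  have htwo : 1 < #{e ∈ uncolored c | v ∈ G.ends e} :=
    one_lt_card.2 ⟨e, by simp [he, hve], f, by simp [hf, hvf], hef⟩
  have := card_add_card_uncolored_le c v
  omega

theorem IsProper.update_some {c : G.E → Option α} (hc : IsProper c) {e : G.E} {a : α}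
    (ha : ∀ v ∈ G.ends e, a ∈ missing c v) : IsProper (update c e (some a)) := by
  simp only [mem_missing] at ha
  intro f g v b hvf hvg hf hg
  by_cases hfe : f = e <;> by_cases hge : g = e
  · rw [hfe, hge]
  · grind [update_apply]
  · grind [update_apply]
  · rw [update_of_ne hfe] at hf
    rw [update_of_ne hge] at hg
    exact hc hvf hvg hf hg

theorem IsOptimal.disjoint_missing {c : G.E → Option α} (hc : IsOptimal c) {e : G.E} {u v : G.V}
    (he : G.ends e = s(u, v)) (hce : c e = none) : Disjoint (missing c u) (missing c v) := by
  refine disjoint_left.2 fun a hu hv => ?_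
  have hproper : IsProper (update c e (some a)) := hc.prop.update_some fun x hx => by
    rw [he, Sym2.mem_iff] at hx
    rcases hx with rfl | rfl <;> assumption
  have hlt : #(uncolored (update c e (some a))) < #(uncolored c) := by
    rw [uncolored_update_some]
    exact card_erase_lt_of_mem (mem_uncolored.2 hce)
  exact hlt.not_ge (hc.2 hproper hlt.le)

omit [DecidableEq α] in
theorem IsOptimal.not_isLoop {c : G.E → Option α} (hc : IsOptimal c)
    (hdeg : ∀ v, G.deg v ≤ Fintype.card α) {e : G.E} (hce : c e = none) : ¬ G.IsLoop e := by
  classical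
  intro hloop
  obtain ⟨u, hu⟩ : ∃ u, Sym2.diag u = G.ends e := ⟨_, Sym2.diag_diagElem hloop⟩
  have he : G.ends e = s(u, u) := hu.symm
  exact (missing_nonempty (hdeg u) hce (by simp [he])).ne_empty
    (disjoint_self_iff_empty _ |>.1 (hc.disjoint_missing he hce))

theorem IsProper.degree_kempeGraph_le {c : G.E → Option α} (hc : IsProper c) (a b : α) (x : G.V)
    [DecidableRel (kempeGraph c a b).Adj] :
    (kempeGraph c a b).degree x ≤ #({a, b} \ missing c x) := by
  have hedge : ∀ y ∈ (kempeGraph c a b).neighborFinset x,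
      ∃ d ∈ ({a, b} : Finset α), ∃ g, c g = some d ∧ G.ends g = s(x, y) := by
    intro y hy
    obtain ⟨⟨g, hcg | hcg, hg⟩, -⟩ := (SimpleGraph.mem_neighborFinset _ _ _).1 hy
    · exact ⟨a, by simp, g, hcg, hg⟩
    · exact ⟨b, by simp, g, hcg, hg⟩
  have : Nonempty α := ⟨a⟩
  choose! d hd hg using hedge
  rw [← SimpleGraph.card_neighborFinset_eq_degree]
  refine card_le_card_of_injOn d (fun y hy => ?_) fun y hy z hz hyz => ?_
  · obtain ⟨g, hcg, hgy⟩ := hg y hy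
    exact mem_sdiff.2 ⟨hd y hy, fun h => mem_missing.1 h g (by simp [hgy]) hcg⟩
  · obtain ⟨g, hcg, hgy⟩ := hg y hy
    obtain ⟨k, hck, hkz⟩ := hg z hz
    obtain rfl : g = k :=
      hc (v := x) (by simp [hgy]) (by simp [hkz]) hcg (hyz ▸ hck)
    exact Sym2.congr_right.1 (hgy.symm.trans hkz)

theorem missing_kempeSwap_of_not_reachable {c : G.E → Option α} {a b : α} {v x : G.V}
    (hx : ¬ (kempeGraph c a b).Reachable v x) :
    missing (kempeSwap c a b v) x = missing c x := by
  ext d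
  simp only [mem_missing]
  exact forall₂_congr fun e hxe => by rw [kempeSwap_of_not_reachable hx hxe]

theorem mem_missing_kempeSwap_self {c : G.E → Option α} {a b : α} {v : G.V}
    (hb : b ∈ missing c v) : a ∈ missing (kempeSwap c a b v) v := by
  refine mem_missing.2 fun e hve h => ?_
  rw [kempeSwap_of_reachable (SimpleGraph.Reachable.refl v) hve, Option.map_eq_some_iff] at h
  obtain ⟨d, hcd, hd⟩ := h
  rw [Equiv.swap_apply_eq_iff, Equiv.swap_apply_left] at hd
  exact mem_missing.1 hb e hve (hd ▸ hcd)

theorem IsOptimal.reachable_kempeGraph {c : G.E → Option α} (hc : IsOptimal c) {e : G.E}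
    {u v : G.V} (he : G.ends e = s(u, v)) (hce : c e = none) {a b : α} (ha : a ∈ missing c u)
    (hb : b ∈ missing c v) : (kempeGraph c a b).Reachable v u := by
  by_contra hu
  have hdisj := (hc.kempeSwap a b v).disjoint_missing he (kempeSwap_eq_none.2 hce)
  rw [missing_kempeSwap_of_not_reachable hu] at hdisj
  exact disjoint_left.1 hdisj ha (mem_missing_kempeSwap_self hb)

theorem IsOptimal.disjoint_missing_of_common_end {c : G.E → Option α} (hc : IsOptimal c)
    {e f : G.E} {u v w : G.V} (he : G.ends e = s(u, v)) (hf : G.ends f = s(u, w))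
    (hce : c e = none) (hcf : c f = none) (hvw : v ≠ w) (hu : (missing c u).Nonempty) :
    Disjoint (missing c v) (missing c w) := by
  classical
  refine disjoint_left.2 fun b hbv hbw => ?_
  obtain ⟨a, ha⟩ := hu
  have huv : u ≠ v := by
    rintro rfl
    exact disjoint_left.1 (hc.disjoint_missing he hce) hbv hbv
  have huw : u ≠ w := by
    rintro rfl
    exact disjoint_left.1 (hc.disjoint_missing hf hcf) hbw hbw
  have hdeg (x) : (kempeGraph c a b).degree x ≤ 2 :=
    (hc.prop.degree_kempeGraph_le a b x).trans ((card_le_card sdiff_subset).trans card_le_two)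
  have hend {x d} (hd : d ∈ ({a, b} : Finset α)) (hdx : d ∈ missing c x) :
      (kempeGraph c a b).degree x ≤ 1 := by
    refine (hc.prop.degree_kempeGraph_le a b x).trans (Nat.le_of_lt_succ ?_)
    have hssub : {a, b} \ missing c x ⊂ ({a, b} : Finset α) :=
      (ssubset_iff_of_subset sdiff_subset).2 ⟨d, hd, fun h => (mem_sdiff.1 h).2 hdx⟩
    exact (card_lt_card hssub).trans_le card_le_two
  exact not_reachable_of_degree_le_one hdeg huv huw hvw (hend (by simp) ha) (hend (by simp) hbv)
    (hend (by simp) hbw) (hc.reachable_kempeGraph he hce ha hbv).symm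
    (hc.reachable_kempeGraph hf hcf ha hbw).symm

omit [DecidableEq α] in
theorem IsOptimal.eq_of_common_end {c : G.E → Option α} (hc : IsOptimal c)
    (hα : Fintype.card α ≤ 3) (hdeg : ∀ v, G.deg v ≤ Fintype.card α) {e f : G.E} {u : G.V}
    (hce : c e = none) (hcf : c f = none) (hue : u ∈ G.ends e) (huf : u ∈ G.ends f) : e = f := by
  classical
  by_contra hef
  obtain ⟨v, he⟩ := hue
  obtain ⟨w, hf⟩ := huf
  have hu : 2 ≤ #(missing c u) :=
    two_le_card_missing (hdeg u) hef hce hcf (by simp [he]) (by simp [hf])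
  have huv := hc.disjoint_missing he hce
  have huw := hc.disjoint_missing hf hcf
  by_cases hvw : v = w
  · subst hvw
    have hv : 2 ≤ #(missing c v) :=
      two_le_card_missing (hdeg v) hef hce hcf (by simp [he]) (by simp [hf])
    have := (card_union_of_disjoint huv).symm.trans_le (card_le_univ _)
    omega
  · have hv := card_pos.2 (missing_nonempty (hdeg v) hce (by simp [he]))
    have hw := card_pos.2 (missing_nonempty (hdeg w) hcf (by simp [hf]))
    have hdisj := hc.disjoint_missing_of_common_end he hf hce hcf hvw (card_pos.1 (by omega))
    have := (card_union_of_disjoint (disjoint_union_right.2 ⟨huv, huw⟩)).symm.trans_le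
      (card_le_univ _)
    rw [card_union_of_disjoint hdisj] at this
    omega

/-- The uncoloured edge `e = uv` and the edge `g` at `u` are such that the colour of `g` is missing
at `v`, so that it can be moved from `g` onto `e`. -/
def IsShiftable (c : G.E → Option α) (e g : G.E) : Prop :=
  c e = none ∧ ∃ u v b, G.ends e = s(u, v) ∧ u ∈ G.ends g ∧ c g = some b ∧ b ∈ missing c v

/-- The colouring `c` with the colour of `g` moved onto `e`. -/
def shift (c : G.E → Option α) (e g : G.E) : G.E → Option α :=
  update (update c g none) e (c g)

theorem IsShiftable.isOptimal_shift {c : G.E → Option α} (hc : IsOptimal c) {e g : G.E}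
    (h : IsShiftable c e g) : IsOptimal (shift c e g) := by
  obtain ⟨hce, u, v, b, he, hug, hcg, hb⟩ := h
  have hfree : ∀ x ∈ G.ends e, b ∈ missing (update c g none) x := by
    intro x hx
    refine mem_missing.2 fun f hxf hcf => ?_
    have hfg : f ≠ g := by rintro rfl; simp at hcf
    rw [update_of_ne hfg] at hcf
    rw [he, Sym2.mem_iff] at hx
    rcases hx with rfl | rfl
    · exact hfg (hc.prop hxf hug hcf hcg)
    · exact mem_missing.1 hb f hxf hcf
  rw [shift, hcg]
  refine hc.of_card_le ((hc.prop.update_none g).update_some hfree) ?_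
  have he' : e ∈ insert g (uncolored c) := mem_insert_of_mem (mem_uncolored.2 hce)
  have hg : g ∉ uncolored c := by simp [hcg]
  rw [uncolored_update_some, uncolored_update_none, card_erase_of_mem he',
    card_insert_of_notMem hg, Nat.add_sub_cancel]

theorem IsOptimal.exists_isShiftable {c : G.E → Option α} (hc : IsOptimal c)
    (hdeg : ∀ v, G.deg v ≤ Fintype.card α) {e : G.E} (hce : c e = none) :
    ∃ g, IsShiftable c e g := by
  obtain ⟨u, v, he⟩ : ∃ u v, G.ends e = s(u, v) := (G.ends e).ind fun u v => ⟨u, v, rfl⟩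
  obtain ⟨b, hb⟩ := missing_nonempty (hdeg v) hce (by simp [he])
  have hu : b ∉ missing c u := disjoint_right.1 (hc.disjoint_missing he hce) hb
  simp only [mem_missing, not_forall, not_not] at hu
  obtain ⟨g, hug, hcg⟩ := hu
  exact ⟨g, hce, u, v, b, he, hug, hcg, hb⟩

section Shift

variable {c : G.E → Option α} {e f g : G.E}

theorem IsShiftable.ne (h : IsShiftable c e g) (hcf : c f = none) : f ≠ g := by
  rintro rfl
  obtain ⟨-, u, v, b, -, -, hcg, -⟩ := h
  simp [hcf] at hcg

theorem IsShiftable.shift_self (h : IsShiftable c e g) : shift c e g g = none := by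
  rw [shift, update_of_ne (h.ne h.1).symm, update_self]

end Shift

/-- The vertex `x` is the far end of an edge whose colour can be moved onto the uncoloured edge
`e`. -/
def IsSatellite (c : G.E → Option α) (e : G.E) (x : G.V) : Prop :=
  ∃ g, IsShiftable c e g ∧ x ∈ G.ends g ∧ x ∉ G.ends e

theorem IsOptimal.exists_isSatellite {c : G.E → Option α} (hc : IsOptimal c)
    (hdeg : ∀ v, G.deg v ≤ Fintype.card α) {e : G.E} (hce : c e = none) :
    ∃ x, IsSatellite c e x := by
  obtain ⟨g, h⟩ := hc.exists_isShiftable hdeg hce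
  have hloop : ¬ G.IsLoop g := (h.isOptimal_shift hc).not_isLoop hdeg h.shift_self
  have ⟨_, u, v, b, he, ⟨x, hg⟩, hcg, hb⟩ := h
  refine ⟨x, g, h, by simp [hg], ?_⟩
  rw [he, Sym2.mem_iff]
  rintro (rfl | rfl)
  · exact hloop (by simp [IsLoop, hg])
  · exact mem_missing.1 hb g (by simp [hg]) hcg

theorem IsSatellite.notMem_ends {c : G.E → Option α} (hc : IsOptimal c)
    (hα : Fintype.card α ≤ 3) (hdeg : ∀ v, G.deg v ≤ Fintype.card α) {e f : G.E} {x : G.V}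
    (hx : IsSatellite c e x) (hcf : c f = none) : x ∉ G.ends f := by
  intro hxf
  obtain ⟨g, h, hxg, hxe⟩ := hx
  have hfe : f ≠ e := by rintro rfl; exact hxe hxf
  have hfg : f ≠ g := h.ne hcf
  have hshift : shift c e g f = none := by rw [shift, update_of_ne hfe, update_of_ne hfg, hcf]
  exact hfg ((h.isOptimal_shift hc).eq_of_common_end hα hdeg hshift h.shift_self hxf hxg)

theorem IsShiftable.shift {c : G.E → Option α} {e g e' g' : G.E} (h : IsShiftable c e g)
    (h' : IsShiftable c e' g') (hgg : g ≠ g') (hdisj : ∀ y ∈ G.ends e, y ∉ G.ends e') :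
    IsShiftable (shift c e g) e' g' := by
  have hge : g' ≠ e := (h'.ne h.1).symm
  have ⟨hce', u, v, b, he', hug', hcg', hb⟩ := h'
  have hee : e' ≠ e := by rintro rfl; exact hdisj u (by simp [he']) (by simp [he'])
  refine ⟨by rw [Multigraph.shift, update_of_ne hee, update_of_ne (h.ne hce'), hce'],
    u, v, b, he', hug', by rw [Multigraph.shift, update_of_ne hge, update_of_ne hgg.symm, hcg'],
    mem_missing.2 fun k hvk hck => ?_⟩
  have hke : k ≠ e := by rintro rfl; exact hdisj v hvk (by simp [he'])
  have hkg : k ≠ g := by rintro rfl; simp [h.shift_self] at hck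
  rw [Multigraph.shift, update_of_ne hke, update_of_ne hkg] at hck
  exact mem_missing.1 hb k hvk hck

theorem IsSatellite.unique {c : G.E → Option α} (hc : IsOptimal c) (hα : Fintype.card α ≤ 3)
    (hdeg : ∀ v, G.deg v ≤ Fintype.card α) {e e' : G.E} {x : G.V} (hx : IsSatellite c e x)
    (hx' : IsSatellite c e' x) : e = e' := by
  by_contra hee
  obtain ⟨g, h, hxg, hxe⟩ := hx
  obtain ⟨g', h', hxg', hxe'⟩ := hx'
  have hdisj : ∀ y ∈ G.ends e, y ∉ G.ends e' := fun y hy hy' =>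
    hee (hc.eq_of_common_end hα hdeg h.1 h'.1 hy hy')
  have hgg : g ≠ g' := by
    rintro rfl
    obtain ⟨-, u, v, b, he, hug, -⟩ := h
    obtain ⟨-, u', v', b', he', hug', -⟩ := h'
    have hux : u ≠ x := by rintro rfl; exact hxe (by simp [he])
    have hux' : u' ≠ x := by rintro rfl; exact hxe' (by simp [he'])
    have hends := (Sym2.mem_and_mem_iff hux).1 ⟨hug, hxg⟩
    have hends' := (Sym2.mem_and_mem_iff hux').1 ⟨hug', hxg'⟩
    obtain rfl : u = u' := Sym2.congr_left.1 (hends.symm.trans hends')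
    exact hdisj u (by simp [he]) (by simp [he'])
  have hsat : IsSatellite (shift c e g) e' x := ⟨g', h.shift h' hgg hdisj, hxg', hxe'⟩
  exact hsat.notMem_ends (h.isOptimal_shift hc) hα hdeg h.shift_self hxg

omit [DecidableEq α] in
theorem IsOptimal.three_mul_card_uncolored_le {c : G.E → Option α} (hc : IsOptimal c)
    (hα : Fintype.card α ≤ 3) (hdeg : ∀ v, G.deg v ≤ Fintype.card α) :
    3 * #(uncolored c) ≤ Fintype.card G.V := by
  classical
  choose x hx using fun e : uncolored c => hc.exists_isSatellite hdeg (mem_uncolored.1 e.2)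
  let claimed (e : uncolored c) : Finset G.V := insert (x e) (G.ends e).toFinset
  have hclaimed (e) : #(claimed e) = 3 := by
    obtain ⟨g, h, -, hxe⟩ := hx e
    rw [card_insert_of_notMem (by simpa using hxe),
      Sym2.card_toFinset_of_not_isDiag _ (hc.not_isLoop hdeg h.1)]
  have hdisj : Pairwise (Disjoint on claimed) := by
    intro e f hef
    have hce := mem_uncolored.1 e.2
    have hcf := mem_uncolored.1 f.2
    refine disjoint_left.2 fun y hye hyf => ?_
    simp only [claimed, mem_insert, Sym2.mem_toFinset] at hye hyf
    rcases hye with rfl | hye <;> rcases hyf with hyf | hyf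
    · exact hef (Subtype.ext ((hx e).unique hc hα hdeg (hyf ▸ hx f)))
    · exact (hx e).notMem_ends hc hα hdeg hcf hyf
    · exact (hx f).notMem_ends hc hα hdeg hce (hyf ▸ hye)
    · exact hef (Subtype.ext (hc.eq_of_common_end hα hdeg hce hcf hye hyf))
  calc 3 * #(uncolored c) = ∑ e, #(claimed e) := by
        simp only [hclaimed, sum_const, card_univ, Fintype.card_coe, smul_eq_mul, mul_comm]
    _ = #(univ.biUnion claimed) := (card_biUnion fun e _ f _ hef => hdisj hef).symm
    _ ≤ Fintype.card G.V := card_le_univ _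

theorem card_add_card_add_card_le_nu3 {H₁ H₂ H₃ : Finset G.E} (h₁ : G.IsMatching H₁)
    (h₂ : G.IsMatching H₂) (h₃ : G.IsMatching H₃) (h₁₂ : Disjoint H₁ H₂) (h₁₃ : Disjoint H₁ H₃)
    (h₂₃ : Disjoint H₂ H₃) : #H₁ + #H₂ + #H₃ ≤ G.nu3 := by
  refine le_csSup ⟨3 * Fintype.card G.E, ?_⟩ ⟨H₁, H₂, H₃, h₁, h₂, h₃, h₁₂, h₁₃, h₂₃, rfl⟩
  rintro m ⟨A, B, C, -, -, -, -, -, -, rfl⟩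
  have := card_le_univ A
  have := card_le_univ B
  have := card_le_univ C
  omega

omit [Fintype α] in
theorem IsProper.isMatching (hG : G.Loopless) {c : G.E → Option α} (hc : IsProper c) (a : α) :
    G.IsMatching {e | c e = some a} := by
  refine ⟨fun e _ => hG e, fun e he f hf hef v hve hvf => hef ?_⟩
  exact hc hve hvf (mem_filter.1 he).2 (mem_filter.1 hf).2

theorem IsProper.card_edges_le (hG : G.Loopless) {c : G.E → Option (Fin 3)} (hc : IsProper c) :
    Fintype.card G.E ≤ G.nu3 + #(uncolored c) := by
  have hdisj {a b : Fin 3} (hab : a ≠ b) :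
      Disjoint (α := Finset G.E) {e | c e = some a} {e | c e = some b} :=
    disjoint_filter.2 fun e _ ha hb => hab (Option.some.inj (ha.symm.trans hb))
  have hclasses := card_add_card_add_card_le_nu3 (hc.isMatching hG 0) (hc.isMatching hG 1)
    (hc.isMatching hG 2) (hdisj (by decide)) (hdisj (by decide)) (hdisj (by decide))
  have hcount : Fintype.card G.E = #(uncolored c) + ∑ a, #{e | c e = some a} := by
    rw [← card_univ, card_eq_sum_card_fiberwise (f := c) (t := univ) (by simp),
      Fintype.sum_option]
    congr 2
    ext
    simp
  rw [Fin.sum_univ_three] at hcount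
  omega

end PartialColoring

theorem cubic_nu3_ge_general (G : Multigraph) (hloopless : G.Loopless)
    (hsubcubic : ∀ v : G.V, G.deg v ≤ 3) :
    3 * Fintype.card G.E ≤ 3 * G.nu3 + Fintype.card G.V := by
  obtain ⟨c, hc⟩ := exists_isOptimal G (Fin 3)
  have huncolored := hc.three_mul_card_uncolored_le (Fintype.card_fin 3).le
    (by simpa only [Fintype.card_fin] using hsubcubic)
  have hcolored := hc.prop.card_edges_le hloopless
  omega

/-- Every cubic graph G satisfies ν₃(G) ≥ (7/6)·|V(G)|. -/
theorem cubic_nu3_ge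
    (G : Multigraph) (hloopless : G.Loopless) (hcubic : ∀ v : G.V, G.deg v = 3) :
    6 * G.nu3 ≥ 7 * Fintype.card G.V := by
  have := G.cubic_nu3_ge_general hloopless fun v => (hcubic v).le
  have := two_mul_card_edges_of_deg_eq hcubic
  omega

end Multigraph
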